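/- Identify ℝ^m with ℝ^{m−n} × ℝ^n with coordinates (q, y), and write ∂/∂y^l for the partial derivative in the l-th direction of the second factor. Let U ⊆ ℝ^m be open, let β^k_{lm} : U → ℝ (1 ≤ k, l, m ≤ n) be smooth functions satisfying the zero-curvature identity ∂β^l_{jk}/∂y^i − ∂β^l_{ik}/∂y^j + β^l_{im} β^m_{jk} − β^l_{jm} β^m_{ik} = 0 on U for all i, j, k, l, and let z₀ ∈ U. Then there exist an open neighbourhood U' ⊆ U of z₀ and a smooth map A : U' → (n×n real matrices) such that A(z₀) is the identity matrix and ∂A_j^k/∂y^l + A_j^m β^k_{lm} = 0 on U' for all j, k, l. -/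

import Mathlib

/-- The constant vector field `∂/∂y^l` on `ℝ^{m−n} × ℝ^n` (here `p = m − n`). -/
def eVec (p n : ℕ) (l : Fin n) : (Fin p → ℝ) × (Fin n → ℝ) := (0, Pi.single l 1)

/-!
Read `β` as a connection form `ω` along the fibres `{q} × ℝⁿ`; the unknown matrix `A` is a
solution of `∇A = dA + A ω = 0`, and the zero-curvature identity says that `ω` is flat.

Let `z₀ = (q₀, y₀)`, and define `A` by parallel transport of the identity along the rays from
`(q, y₀)` to `(q, y)`. Along one ray this is the Volterra equation `X + ∫ X b = 1` in the Banach
space of continuous matrix-valued functions on `[0, 1]`. Its coefficient `b` depends smoothly on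
the endpoint of the ray and vanishes for the endpoint `z₀`, so near `z₀` the operator on the left
is invertible, and smoothness of inversion makes `A` smooth.

By construction `∇A` vanishes in the radial direction. If `ω` is flat, the Ricci identity turns
this into a homogeneous linear differential equation for each component of `∇A` along the rays,
whose only solution regular at the starting point is zero.
-/

open Set Filter Topology Metric
open scoped unitInterval

universe u

section Curry

/-- Pointwise application `(T, v) ↦ (t ↦ T t v)` of a compact family of operators, as a bounded
bilinear map. It turns a continuous family of derivatives into the derivative of a curried map. -/
noncomputable def pointwiseApply (K E F : Type*) [TopologicalSpace K] [CompactSpace K]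
    [NormedAddCommGroup E] [NormedSpace ℝ E] [NormedAddCommGroup F] [NormedSpace ℝ F] :
    C(K, E →L[ℝ] F) →L[ℝ] E →L[ℝ] C(K, F) :=
  LinearMap.mkContinuous₂
    (LinearMap.mk₂ ℝ
      (fun (T : C(K, E →L[ℝ] F)) (v : E) => (⟨fun t => T t v, by fun_prop⟩ : C(K, F)))
      (fun _ _ _ => by ext; simp) (fun _ _ _ => by ext; simp) (fun _ _ _ => by ext; simp)
      (fun _ _ _ => by ext; simp))
    1 (fun T v => by
      rw [one_mul, LinearMap.mk₂_apply, ContinuousMap.norm_le _ (by positivity)]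
      exact fun t => (T t).le_of_opNorm_le (T.norm_coe_le_norm t) v)

theorem hasFDerivAt_of_forall_hasFDerivAt_apply {K E F : Type*} [TopologicalSpace K]
    [CompactSpace K] [NormedAddCommGroup E] [NormedSpace ℝ E] [NormedAddCommGroup F]
    [NormedSpace ℝ F] {g : E → C(K, F)} {g' : E → C(K, E →L[ℝ] F)} {z : E}
    (hg' : ContinuousAt g' z)
    (h : ∀ᶠ w in 𝓝 z, ∀ t, HasFDerivAt (fun x => g x t) (g' w t) w) :
    HasFDerivAt g (pointwiseApply K E F (g' z)) z := by
  rw [hasFDerivAt_iff_isLittleO, Asymptotics.isLittleO_iff]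
  intro c hc
  obtain ⟨δ, hδ, hball⟩ := eventually_nhds_iff_ball.1
    (h.and (hg'.eventually (closedBall_mem_nhds (g' z) hc)))
  filter_upwards [ball_mem_nhds z hδ] with w hw
  rw [ContinuousMap.norm_le _ (by positivity)]
  intro t
  refine (convex_ball z δ).norm_image_sub_le_of_norm_hasFDerivWithin_le' (f := fun x => g x t)
    (f' := fun x => g' x t) (φ := g' z t)
    (fun x hx => ((hball x hx).1 t).hasFDerivWithinAt) (fun x hx => ?_) (mem_ball_self hδ) hw
  rw [← dist_eq_norm]
  exact (ContinuousMap.dist_apply_le_dist t).trans (hball x hx).2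

/-- The restrictions of `f (z, ·)` to a compact set `K`, as points of the Banach space `C(K, F)`;
the value is `0` where `f (z, ·)` is not continuous on `K`. -/
noncomputable def compactCurry {E P F : Type*} [TopologicalSpace P] [NormedAddCommGroup F]
    (K : Set P) (f : E × P → F) (z : E) : C(K, F) :=
  ContinuousMap.mkD (K.domRestrict fun t => f (z, t)) 0

theorem compactCurry_apply {E P F : Type*} [TopologicalSpace E] [TopologicalSpace P]
    [NormedAddCommGroup F] {K : Set P} {f : E × P → F} {z : E}
    (hf : ∀ t ∈ K, ContinuousAt f (z, t)) (t : K) : compactCurry K f z t = f (z, t) :=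
  ContinuousMap.mkD_apply_of_continuousOn (f := fun t => f (z, t)) fun t ht =>
    ((hf t ht).comp (Continuous.prodMk_right z).continuousAt).continuousWithinAt

variable {P : Type*} [NormedAddCommGroup P] [NormedSpace ℝ P] {K : Set P} [CompactSpace K]
  {E F : Type u} [NormedAddCommGroup E] [NormedSpace ℝ E] [NormedAddCommGroup F] [NormedSpace ℝ F]
  {V : Set E} {f : E × P → F}

theorem contDiffOn_nat_compactCurry (hV : IsOpen V) (n : ℕ)
    (hf : ∀ z ∈ V, ∀ t ∈ K, ContDiffAt ℝ n f (z, t)) :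
    ContDiffOn ℝ n (compactCurry K f) V := by
  induction n generalizing F with
  | zero =>
    rw [Nat.cast_zero, contDiffOn_zero]
    exact ContinuousMap.continuousOn_mkD_restrict_of_uncurry (fun z t => f (z, t)) 0
      fun p hp => (hf p.1 hp.1 p.2 hp.2).continuousAt.continuousWithinAt
  | succ n ih =>
    rw [Nat.cast_succ] at hf ⊢
    let f' : E × P → E →L[ℝ] F := fun p => (fderiv ℝ f p).comp (ContinuousLinearMap.inl ℝ E P)
    have hf' : ∀ z ∈ V, ∀ t ∈ K, ContDiffAt ℝ n f' (z, t) := fun z hz t ht =>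
      ((hf z hz t ht).fderiv_right le_rfl).clm_comp contDiffAt_const
    have hcurry' : ContDiffOn ℝ n (compactCurry K f') V := ih hf'
    have hslice : ∀ z ∈ V, ∀ t : K,
        HasFDerivAt (fun w => compactCurry K f w t) (compactCurry K f' z t) z := by
      intro z hz t
      rw [compactCurry_apply fun s hs => (hf' z hz s hs).continuousAt]
      have hfz : HasFDerivAt f (fderiv ℝ f (z, (t : P))) (z, (t : P)) :=
        ((hf z hz t t.2).differentiableAt (by simp)).hasFDerivAt
      refine (hfz.comp z (hasFDerivAt_prodMk_left z (t : P))).congr_of_eventuallyEq ?_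
      filter_upwards [hV.mem_nhds hz] with w hw
      exact compactCurry_apply (fun s hs => (hf w hw s hs).continuousAt) t
    refine (contDiffOn_succ_iff_hasFDerivWithinAt_of_uniqueDiffOn hV.uniqueDiffOn).2
      ⟨fun h => by simp at h, _, (pointwiseApply K E F).contDiff.comp_contDiffOn hcurry',
        fun z hz => (hasFDerivAt_of_forall_hasFDerivAt_apply ?_ ?_).hasFDerivWithinAt⟩
    · exact hcurry'.continuousOn.continuousAt (hV.mem_nhds hz)
    · filter_upwards [hV.mem_nhds hz] using hslice

theorem contDiffOn_compactCurry (hV : IsOpen V)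
    (hf : ∀ z ∈ V, ∀ t ∈ K, ContDiffAt ℝ (⊤ : ℕ∞) f (z, t)) :
    ContDiffOn ℝ (⊤ : ℕ∞) (compactCurry K f) V :=
  contDiffOn_infty.2 fun n => contDiffOn_nat_compactCurry hV n fun z hz t ht =>
    contDiffAt_infty.1 (hf z hz t ht) n

end Curry

section Primitive
variable {M : Type*} [NormedAddCommGroup M] [NormedSpace ℝ M]

/-- The primitive `h ↦ (t ↦ ∫ s in 0..t, h s)` as a bounded operator on `C([0, 1], M)`. -/
noncomputable def primitiveCLM (M : Type*) [NormedAddCommGroup M] [NormedSpace ℝ M] :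
    C(I, M) →L[ℝ] C(I, M) :=
  LinearMap.mkContinuous
    { toFun := fun h => ⟨fun t => ∫ s in (0 : ℝ)..t, h.IccExtend zero_le_one s,
        (intervalIntegral.continuous_primitive
          (fun _ _ => (ContinuousMap.continuous _).intervalIntegrable _ _) 0).comp
          continuous_subtype_val⟩
      map_add' := fun g h => by
        ext t
        exact intervalIntegral.integral_add
          ((g.IccExtend zero_le_one).continuous.intervalIntegrable _ _)
          ((h.IccExtend zero_le_one).continuous.intervalIntegrable _ _)
      map_smul' := fun c h => by
        ext t
        exact intervalIntegral.integral_smul c _ }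
    1 fun h => by
      rw [one_mul, ContinuousMap.norm_le _ (norm_nonneg h)]
      intro t
      have ht : |(t : ℝ) - 0| ≤ 1 := by rw [sub_zero, abs_of_nonneg t.2.1]; exact t.2.2
      exact (intervalIntegral.norm_integral_le_of_norm_le_const fun s _ =>
        h.norm_coe_le_norm _).trans (mul_le_of_le_one_right (norm_nonneg h) ht)

theorem primitiveCLM_apply (h : C(I, M)) (t : I) :
    primitiveCLM M h t = ∫ s in (0 : ℝ)..t, h.IccExtend zero_le_one s := rfl

/-- The time rescaling `b ↦ (t ↦ τ • b (τ * t))` of a coefficient on `[0, 1]`, which restricts a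
linear equation `X' = -X * b` to `[0, τ]` and stretches it back to `[0, 1]`. -/
def timeRescale (τ : I) (b : C(I, M)) : C(I, M) :=
  ⟨fun t => (τ : ℝ) • b (τ * t), by fun_prop⟩

theorem primitiveCLM_timeRescale (τ : I) (h : C(I, M)) (t : I) :
    primitiveCLM M (timeRescale τ h) t = primitiveCLM M h (τ * t) := by
  have hcongr : ∀ s ∈ uIcc (0 : ℝ) t, (timeRescale τ h).IccExtend zero_le_one s
      = (τ : ℝ) • h.IccExtend zero_le_one ((τ : ℝ) * s) := by
    intro s hs
    rw [uIcc_of_le t.2.1] at hs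
    have hs' : s ∈ I := ⟨hs.1, hs.2.trans t.2.2⟩
    have hτs : (τ : ℝ) * s ∈ I := (τ * ⟨s, hs'⟩ : I).2
    rw [ContinuousMap.coe_IccExtend, ContinuousMap.coe_IccExtend, IccExtend_of_mem _ _ hs',
      IccExtend_of_mem _ _ hτs]
    rfl
  rw [primitiveCLM_apply, primitiveCLM_apply, intervalIntegral.integral_congr hcongr,
    intervalIntegral.integral_smul, intervalIntegral.smul_integral_comp_mul_left, mul_zero,
    Icc.coe_mul]

end Primitive

section Volterra
variable {M : Type*} [NormedRing M] [NormedAlgebra ℝ M]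

/-- The operator `X ↦ X + ∫ X * b` on `C([0, 1], M)`: the initial value problem `X' = -X * b`,
`X 0 = 1` is the equation `volterraOp b X = 1`. -/
noncomputable def volterraOp (b : C(I, M)) : C(I, M) →L[ℝ] C(I, M) :=
  1 + (primitiveCLM M).comp ((ContinuousLinearMap.mul ℝ C(I, M)).flip b)

theorem volterraOp_apply (b X : C(I, M)) (t : I) :
    volterraOp b X t = X t + primitiveCLM M (X * b) t := rfl

theorem volterraOp_zero : volterraOp (0 : C(I, M)) = 1 := by
  simp [volterraOp]

theorem contDiff_volterraOp {n : WithTop ℕ∞} : ContDiff ℝ n (volterraOp (M := M)) :=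
  contDiff_const.add (contDiff_const.clm_comp (ContinuousLinearMap.contDiff _))

theorem volterraOp_timeRescale (τ : I) (b X : C(I, M)) (t : I) :
    volterraOp (timeRescale τ b) (X.comp ⟨fun s => τ * s, by fun_prop⟩) t =
      volterraOp b X (τ * t) := by
  have hmul : X.comp ⟨fun s => τ * s, by fun_prop⟩ * timeRescale τ b = timeRescale τ (X * b) := by
    ext s
    simp [timeRescale]
  rw [volterraOp_apply, volterraOp_apply, hmul, primitiveCLM_timeRescale]
  rfl

/-- The solution `X` of `X' = -X * b`, `X 0 = 1` on `[0, 1]`, defined to be `0` where the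
inverse of `volterraOp b` does not exist. -/
noncomputable def volterraSol (b : C(I, M)) : C(I, M) :=
  Ring.inverse (volterraOp b) 1

theorem volterraOp_volterraSol {b : C(I, M)} (hb : IsUnit (volterraOp b)) :
    volterraOp b (volterraSol b) = 1 :=
  congrArg (fun T : C(I, M) →L[ℝ] C(I, M) => T 1) (Ring.mul_inverse_cancel _ hb)

theorem eq_volterraSol {b X : C(I, M)} (hb : IsUnit (volterraOp b)) (hX : volterraOp b X = 1) :
    X = volterraSol b := by
  rw [volterraSol, ← hX]
  exact (congrArg (fun T : C(I, M) →L[ℝ] C(I, M) => T X) (Ring.inverse_mul_cancel _ hb)).symm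

theorem volterraSol_zero : volterraSol (0 : C(I, M)) = 1 := by
  rw [volterraSol, volterraOp_zero, Ring.inverse_one]
  rfl

theorem volterraSol_timeRescale (τ : I) {b : C(I, M)} (hb : IsUnit (volterraOp b))
    (hτb : IsUnit (volterraOp (timeRescale τ b))) (t : I) :
    volterraSol (timeRescale τ b) t = volterraSol b (τ * t) := by
  have hsol : volterraOp (timeRescale τ b)
      ((volterraSol b).comp ⟨fun s => τ * s, by fun_prop⟩) = 1 := by
    ext s
    rw [volterraOp_timeRescale, volterraOp_volterraSol hb]
    rfl
  rw [← eq_volterraSol hτb hsol]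
  rfl

theorem hasDerivWithinAt_volterraSol [CompleteSpace M] {b : C(I, M)} (hb : IsUnit (volterraOp b))
    (t : I) :
    HasDerivWithinAt ((volterraSol b).IccExtend zero_le_one) (-(volterraSol b t * b t)) I t := by
  let h : C(ℝ, M) := (volterraSol b * b).IccExtend zero_le_one
  have hprim : HasDerivAt (fun s : ℝ => 1 - ∫ r in (0 : ℝ)..s, h r) (-h t) t :=
    (intervalIntegral.integral_hasDerivAt_right (h.continuous.intervalIntegrable _ _)
      (h.continuous.stronglyMeasurableAtFilter _ _) h.continuous.continuousAt).const_sub 1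
  have ht : h t = volterraSol b t * b t := IccExtend_val zero_le_one (volterraSol b * b) t
  rw [← ht]
  refine hprim.hasDerivWithinAt.congr_of_mem (fun s hs => ?_) t.2
  rw [ContinuousMap.coe_IccExtend, IccExtend_of_mem _ _ hs, eq_sub_iff_add_eq]
  exact congrArg (fun X : C(I, M) => X ⟨s, hs⟩) (volterraOp_volterraSol hb)

theorem isOpen_setOf_isUnit_volterraOp [CompleteSpace M] :
    IsOpen {b : C(I, M) | IsUnit (volterraOp b)} := by
  have hcont : Continuous (volterraOp (M := M)) := (contDiff_volterraOp (n := 0)).continuous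
  exact (Units.isOpen (R := C(I, M) →L[ℝ] C(I, M))).preimage hcont

theorem contDiffAt_volterraSol [CompleteSpace M] {n : WithTop ℕ∞} {b : C(I, M)}
    (hb : IsUnit (volterraOp b)) : ContDiffAt ℝ n volterraSol b := by
  have hinv : ContDiffAt ℝ n Ring.inverse (volterraOp b) :=
    contDiffAt_ringInverse ℝ (R := C(I, M) →L[ℝ] C(I, M)) hb.unit
  exact (hinv.comp b contDiff_volterraOp.contDiffAt).clm_apply contDiffAt_const

end Volterra

section FiberRay
variable {Q Y : Type*} [AddCommGroup Y] [Module ℝ Y] (y₀ : Y) (z : Q × Y)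

/-- The ray in the fibre `{z.1} × Y` from `y₀` at time `0` to `z` at time `1`. -/
def fiberRay (t : ℝ) : Q × Y :=
  (z.1, y₀ + t • (z.2 - y₀))

theorem fiberRay_one : fiberRay y₀ z 1 = z := by
  simp [fiberRay]

theorem fiberRay_snd_sub (t : ℝ) : (fiberRay y₀ z t).2 - y₀ = t • (z.2 - y₀) := by
  simp [fiberRay]

theorem fiberRay_fiberRay (s t : ℝ) : fiberRay y₀ (fiberRay y₀ z s) t = fiberRay y₀ z (s * t) := by
  simp [fiberRay, smul_smul, mul_comm]

/-- Each fibre `{q} × Y` meets `V` in a set that is star-shaped about `y₀`. -/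
def IsFiberStarShaped (V : Set (Q × Y)) : Prop :=
  ∀ z ∈ V, ∀ t ∈ I, fiberRay y₀ z t ∈ V

end FiberRay

section NormedFiberRay
variable {Q Y : Type*} [NormedAddCommGroup Y] [NormedSpace ℝ Y]

theorem isFiberStarShaped_ball [PseudoMetricSpace Q] (z₀ : Q × Y) (r : ℝ) :
    IsFiberStarShaped z₀.2 (ball z₀ r) := by
  intro z hz t ht
  rw [mem_ball, Prod.dist_eq, max_lt_iff] at hz ⊢
  refine ⟨hz.1, lt_of_le_of_lt ?_ hz.2⟩
  rw [dist_eq_norm, fiberRay_snd_sub, norm_smul, Real.norm_of_nonneg ht.1, dist_eq_norm]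
  exact mul_le_of_le_one_left (norm_nonneg _) ht.2

variable [NormedAddCommGroup Q] [NormedSpace ℝ Q] (y₀ : Y)

theorem contDiff_fiberRay {n : WithTop ℕ∞} :
    ContDiff ℝ n fun p : (Q × Y) × ℝ => fiberRay y₀ p.1 p.2 := by
  unfold fiberRay
  fun_prop

theorem hasDerivAt_fiberRay (z : Q × Y) (t : ℝ) :
    HasDerivAt (fiberRay y₀ z) ((0, z.2 - y₀) : Q × Y) t :=
  (hasDerivAt_const t z.1).prodMk
    (by simpa using ((hasDerivAt_id t).smul_const (z.2 - y₀)).const_add y₀)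

end NormedFiberRay

section Connection
variable {Q Y M : Type*} [NormedAddCommGroup Q] [NormedSpace ℝ Q] [NormedAddCommGroup Y]
  [NormedSpace ℝ Y] [NormedRing M] [NormedAlgebra ℝ M] {ω : Q × Y → Y →L[ℝ] M} {A : Q × Y → M}
  {z : Q × Y}

/-- The covariant derivative `∇A = dA + A ω` along the fibres `{q} × Y`, for a connection form `ω`
acting by multiplication from the right. -/
noncomputable def fiberCovDeriv (ω : Q × Y → Y →L[ℝ] M) (A : Q × Y → M) (z : Q × Y) : Y →L[ℝ] M :=
  (fderiv ℝ A z).comp (ContinuousLinearMap.inr ℝ Q Y) +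
    (ContinuousLinearMap.mul ℝ M (A z)).comp (ω z)

theorem fiberCovDeriv_apply (ω : Q × Y → Y →L[ℝ] M) (A : Q × Y → M) (z : Q × Y) (u : Y) :
    fiberCovDeriv ω A z u = fderiv ℝ A z (0, u) + A z * ω z u := rfl

/-- The curvature `F(u, v) = ∂_u ω(v) - ∂_v ω(u) + ω(v) ω(u) - ω(u) ω(v)` of `ω` along the fibres.
The order of the products is that of a connection acting from the right. -/
noncomputable def fiberCurvature (ω : Q × Y → Y →L[ℝ] M) (z : Q × Y) : Y →L[ℝ] Y →L[ℝ] M :=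
  let D := (fderiv ℝ ω z).comp (ContinuousLinearMap.inr ℝ Q Y)
  let P := (ContinuousLinearMap.mul ℝ M).bilinearComp (ω z) (ω z)
  D - D.flip + (P.flip - P)

theorem fiberCurvature_apply (ω : Q × Y → Y →L[ℝ] M) (z : Q × Y) (u v : Y) :
    fiberCurvature ω z u v = fderiv ℝ ω z (0, u) v - fderiv ℝ ω z (0, v) u +
      (ω z v * ω z u - ω z u * ω z v) := rfl

theorem hasFDerivAt_fderiv_of_contDiffAt_two {E F : Type*} [NormedAddCommGroup E]
    [NormedSpace ℝ E] [NormedAddCommGroup F] [NormedSpace ℝ F] {f : E → F} {x : E}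
    (hf : ContDiffAt ℝ 2 f x) : HasFDerivAt (fderiv ℝ f) (fderiv ℝ (fderiv ℝ f) x) x :=
  ((hf.fderiv_right (m := 1) (by norm_num)).differentiableAt one_ne_zero).hasFDerivAt

theorem differentiableAt_fiberCovDeriv (hA : ContDiffAt ℝ 2 A z) (hω : DifferentiableAt ℝ ω z) :
    DifferentiableAt ℝ (fiberCovDeriv ω A) z := by
  have hA1 : DifferentiableAt ℝ A z := hA.differentiableAt two_ne_zero
  exact ((hasFDerivAt_fderiv_of_contDiffAt_two hA).differentiableAt.clm_comp
    (differentiableAt_const _)).add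
      (((ContinuousLinearMap.mul ℝ M).differentiableAt.comp z hA1).clm_comp hω)

theorem fderiv_fiberCovDeriv_apply (hA : ContDiffAt ℝ 2 A z) (hω : DifferentiableAt ℝ ω z)
    (h : Q × Y) (u : Y) :
    fderiv ℝ (fiberCovDeriv ω A) z h u =
      fderiv ℝ (fderiv ℝ A) z h (0, u) + (A z * fderiv ℝ ω z h u + fderiv ℝ A z h * ω z u) := by
  have hA1 : HasFDerivAt A (fderiv ℝ A z) z := (hA.differentiableAt two_ne_zero).hasFDerivAt
  have hsum := ((hasFDerivAt_fderiv_of_contDiffAt_two hA).clm_apply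
    (hasFDerivAt_const ((0, u) : Q × Y) z)).add
      (hA1.mul' (hω.hasFDerivAt.clm_apply (hasFDerivAt_const u z)))
  have happly := (differentiableAt_fiberCovDeriv hA hω).hasFDerivAt.clm_apply
    (hasFDerivAt_const u z)
  simpa using congrArg (fun L : Q × Y →L[ℝ] M => L h) (happly.unique hsum)

/-- The Ricci identity `∇_u ∇_v A - ∇_v ∇_u A = A F(u, v)`. -/
theorem fiberCovDeriv_commutator (hA : ContDiffAt ℝ 2 A z) (hω : DifferentiableAt ℝ ω z)
    (u v : Y) :
    (fderiv ℝ (fiberCovDeriv ω A) z (0, u) v + fiberCovDeriv ω A z v * ω z u) -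
      (fderiv ℝ (fiberCovDeriv ω A) z (0, v) u + fiberCovDeriv ω A z u * ω z v) =
      A z * fiberCurvature ω z u v := by
  have hsymm : fderiv ℝ (fderiv ℝ A) z (0, u) (0, v) = fderiv ℝ (fderiv ℝ A) z (0, v) (0, u) :=
    hA.isSymmSndFDerivAt (by rw [minSmoothness_of_isRCLikeNormedField]) _ _
  simp only [fderiv_fiberCovDeriv_apply hA hω, fiberCovDeriv_apply, fiberCurvature_apply, hsymm]
  noncomm_ring

theorem fderiv_fiberCovDeriv_of_radial {y₀ : Y} (hA : ContDiffAt ℝ 2 A z)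
    (hω : DifferentiableAt ℝ ω z) (hrad : ∀ᶠ w in 𝓝 z, fiberCovDeriv ω A w (w.2 - y₀) = 0)
    (h : Q × Y) :
    fderiv ℝ (fiberCovDeriv ω A) z h (z.2 - y₀) = -fiberCovDeriv ω A z h.2 := by
  have hderiv := (differentiableAt_fiberCovDeriv hA hω).hasFDerivAt.clm_apply
    ((hasFDerivAt_snd (𝕜 := ℝ) (p := z)).sub_const y₀)
  have hzero := hderiv.unique ((hasFDerivAt_const (0 : M) z).congr_of_eventuallyEq hrad)
  have happly := congrArg (fun L : Q × Y →L[ℝ] M => L h) hzero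
  exact eq_neg_of_add_eq_zero_right (by simpa using happly)

theorem fderiv_fiberCovDeriv_radial_direction {y₀ : Y} (hA : ContDiffAt ℝ 2 A z)
    (hω : DifferentiableAt ℝ ω z) (hrad : ∀ᶠ w in 𝓝 z, fiberCovDeriv ω A w (w.2 - y₀) = 0)
    (hflat : fiberCurvature ω z = 0) (u : Y) :
    fderiv ℝ (fiberCovDeriv ω A) z (0, z.2 - y₀) u =
      -fiberCovDeriv ω A z u - fiberCovDeriv ω A z u * ω z (z.2 - y₀) := by
  have hcomm := fiberCovDeriv_commutator hA hω u (z.2 - y₀)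
  rw [hflat, hrad.self_of_nhds, fderiv_fiberCovDeriv_of_radial hA hω hrad] at hcomm
  simp only [zero_mul, add_zero, zero_apply, mul_zero] at hcomm
  rw [eq_sub_iff_add_eq, ← sub_eq_zero.1 hcomm]

/-- Along the ray `γ` through `z`, the equation says `(t w(γ t))' = -(t w(γ t)) ω(γ t)(γ' t)`, and
`t w(γ t)` vanishes at `t = 0`. -/
theorem eq_zero_of_fderiv_radial {y₀ : Y} {V : Set (Q × Y)} (hV : IsFiberStarShaped y₀ V)
    (hω : ContinuousOn ω V) {w : Q × Y → M} (hw : ∀ z ∈ V, DifferentiableAt ℝ w z)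
    (hrad : ∀ z ∈ V, fderiv ℝ w z (0, z.2 - y₀) = -w z - w z * ω z (z.2 - y₀)) (hz : z ∈ V) :
    w z = 0 := by
  let γ : ℝ → Q × Y := fiberRay y₀ z
  let v : Y := z.2 - y₀
  have hγ : ContinuousOn γ I := fun t _ =>
    (hasDerivAt_fiberRay y₀ z t).continuousAt.continuousWithinAt
  obtain ⟨C, hC⟩ := isCompact_Icc.exists_bound_of_continuousOn (s := I)
    ((hω.comp hγ (hV z hz)).clm_apply continuousOn_const : ContinuousOn (fun t => ω (γ t) v) I)
  have hderiv : ∀ t ∈ I,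
      HasDerivAt (fun t => t • w (γ t)) (-(t • w (γ t) * ω (γ t) v)) t := by
    intro t ht
    have hγt : γ t ∈ V := hV z hz t ht
    have hradt : t • fderiv ℝ w (γ t) (0, v) = -w (γ t) - w (γ t) * ω (γ t) (t • v) := by
      have h := hrad _ hγt
      rwa [fiberRay_snd_sub, ← smul_zero t, ← Prod.smul_mk, map_smul] at h
    refine ((hasDerivAt_id t).smul ((hw _ hγt).hasFDerivAt.comp_hasDerivAt t
      (hasDerivAt_fiberRay y₀ z t))).congr_deriv ?_
    change t • fderiv ℝ w (γ t) (0, v) + (1 : ℝ) • w (γ t) = _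
    rw [hradt, one_smul, map_smul, mul_smul_comm, smul_mul_assoc]
    abel
  have hzero : ∀ t ∈ I, t • w (γ t) = 0 :=
    eq_zero_of_abs_deriv_le_mul_abs_self_of_eq_zero_right (K := C)
      (fun t ht => (hderiv t ht).continuousAt.continuousWithinAt)
      (fun t ht => (hderiv t (Ico_subset_Icc_self ht)).hasDerivWithinAt) (zero_smul ℝ _)
      fun t ht => by
        rw [norm_neg, mul_comm C]
        exact (norm_mul_le _ _).trans
          (mul_le_mul_of_nonneg_left (hC t (Ico_subset_Icc_self ht)) (norm_nonneg _))
  simpa [γ, fiberRay_one] using hzero 1 (by simp)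

theorem fiberCovDeriv_eq_zero_of_radial {y₀ : Y} {V : Set (Q × Y)} (hVo : IsOpen V)
    (hV : IsFiberStarShaped y₀ V) (hω : ∀ z ∈ V, DifferentiableAt ℝ ω z)
    (hflat : ∀ z ∈ V, fiberCurvature ω z = 0) (hA : ∀ z ∈ V, ContDiffAt ℝ 2 A z)
    (hrad : ∀ z ∈ V, fiberCovDeriv ω A z (z.2 - y₀) = 0) (hz : z ∈ V) :
    fiberCovDeriv ω A z = 0 := by
  ext u
  have hdiff : ∀ z ∈ V, HasFDerivAt (fun z => fiberCovDeriv ω A z u)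
      ((fderiv ℝ (fiberCovDeriv ω A) z).flip u) z := fun z hz => by
    simpa using (differentiableAt_fiberCovDeriv (hA z hz) (hω z hz)).hasFDerivAt.clm_apply
      (hasFDerivAt_const u z)
  refine eq_zero_of_fderiv_radial (w := fun z => fiberCovDeriv ω A z u) hV
    (fun z hz => (hω z hz).continuousAt.continuousWithinAt)
    (fun z hz => (hdiff z hz).differentiableAt) (fun z hz => ?_) hz
  rw [(hdiff z hz).fderiv]
  exact fderiv_fiberCovDeriv_radial_direction (hA z hz) (hω z hz)
    (by filter_upwards [hVo.mem_nhds hz] using hrad) (hflat z hz) u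

end Connection

section RadialTransport
variable {Q Y M : Type u} [NormedAddCommGroup Q] [NormedSpace ℝ Q] [NormedAddCommGroup Y]
  [NormedSpace ℝ Y] [NormedRing M] [NormedAlgebra ℝ M] {ω : Q × Y → Y →L[ℝ] M} {y₀ : Y}
  {V : Set (Q × Y)} {z : Q × Y}

/-- The coefficient `t ↦ ω(γ t)(γ' t)` of the parallel transport equation along the ray `γ` from
`(z.1, y₀)` to `z`. -/
noncomputable def rayCoeff (ω : Q × Y → Y →L[ℝ] M) (y₀ : Y) : Q × Y → C(I, M) :=
  compactCurry I fun p => ω (fiberRay y₀ p.1 p.2) (p.1.2 - y₀)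

/-- The parallel transport of `1` from `(z.1, y₀)` to `z` along the ray in the fibre. -/
noncomputable def radialTransport (ω : Q × Y → Y →L[ℝ] M) (y₀ : Y) (z : Q × Y) : M :=
  volterraSol (rayCoeff ω y₀ z) 1

theorem contDiffAt_rayCoeff_integrand {n : WithTop ℕ∞} {t : ℝ}
    (hω : ContDiffAt ℝ n ω (fiberRay y₀ z t)) :
    ContDiffAt ℝ n (fun p : (Q × Y) × ℝ => ω (fiberRay y₀ p.1 p.2) (p.1.2 - y₀)) (z, t) :=
  (hω.comp (z, t) (contDiff_fiberRay y₀).contDiffAt).clm_apply (by fun_prop)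

theorem rayCoeff_apply (hω : ∀ t ∈ I, ContinuousAt ω (fiberRay y₀ z t)) (t : I) :
    rayCoeff ω y₀ z t = ω (fiberRay y₀ z t) (z.2 - y₀) :=
  compactCurry_apply (f := fun p : (Q × Y) × ℝ => ω (fiberRay y₀ p.1 p.2) (p.1.2 - y₀))
    (fun s hs => ((hω s hs).comp (x := (z, s))
      (contDiff_fiberRay (n := 0) y₀).continuous.continuousAt).clm_apply (by fun_prop)) t

theorem contDiffOn_rayCoeff (hVo : IsOpen V) (hV : IsFiberStarShaped y₀ V)
    (hω : ∀ z ∈ V, ContDiffAt ℝ (⊤ : ℕ∞) ω z) : ContDiffOn ℝ (⊤ : ℕ∞) (rayCoeff ω y₀) V :=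
  contDiffOn_compactCurry hVo fun z hz t ht => contDiffAt_rayCoeff_integrand (hω _ (hV z hz t ht))

theorem rayCoeff_fiberRay (hω : ∀ t ∈ I, ContinuousAt ω (fiberRay y₀ z t)) (τ : I) :
    rayCoeff ω y₀ (fiberRay y₀ z τ) = timeRescale τ (rayCoeff ω y₀ z) := by
  have hωτ : ∀ t ∈ I, ContinuousAt ω (fiberRay y₀ (fiberRay y₀ z τ) t) := fun t ht => by
    simpa only [fiberRay_fiberRay] using hω _ (unitInterval.mul_mem τ.2 ht)
  ext t
  rw [rayCoeff_apply hωτ, fiberRay_fiberRay, fiberRay_snd_sub, map_smul]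
  exact congrArg ((τ : ℝ) • ·) (rayCoeff_apply hω (τ * t)).symm

theorem rayCoeff_of_snd_eq (hω : ContinuousAt ω z) (hz : z.2 = y₀) : rayCoeff ω y₀ z = 0 := by
  have hray : ∀ t, fiberRay y₀ z t = z := fun t => Prod.ext rfl (by simp [fiberRay, hz])
  ext t
  rw [rayCoeff_apply fun t _ => (hray t).symm ▸ hω, hz, sub_self, map_zero,
    ContinuousMap.zero_apply]

theorem radialTransport_of_snd_eq (hω : ContinuousAt ω z) (hz : z.2 = y₀) :
    radialTransport ω y₀ z = 1 := by
  rw [radialTransport, rayCoeff_of_snd_eq hω hz, volterraSol_zero, ContinuousMap.one_apply]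

theorem contDiffOn_radialTransport [CompleteSpace M] (hVo : IsOpen V) (hV : IsFiberStarShaped y₀ V)
    (hω : ∀ z ∈ V, ContDiffAt ℝ (⊤ : ℕ∞) ω z)
    (hunit : ∀ z ∈ V, IsUnit (volterraOp (rayCoeff ω y₀ z))) :
    ContDiffOn ℝ (⊤ : ℕ∞) (radialTransport ω y₀) V := fun z hz =>
  (ContinuousMap.evalCLM ℝ (1 : I) : C(I, M) →L[ℝ] M).contDiff.contDiffAt.comp_contDiffWithinAt z
    ((contDiffAt_volterraSol (hunit z hz)).comp_contDiffWithinAt z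
      (contDiffOn_rayCoeff hVo hV hω z hz))

theorem radialTransport_fiberRay (hV : IsFiberStarShaped y₀ V) (hω : ∀ z ∈ V, ContinuousAt ω z)
    (hunit : ∀ z ∈ V, IsUnit (volterraOp (rayCoeff ω y₀ z))) (hz : z ∈ V) (τ : I) :
    radialTransport ω y₀ (fiberRay y₀ z τ) = volterraSol (rayCoeff ω y₀ z) τ := by
  have hresc := rayCoeff_fiberRay (fun t ht => hω _ (hV z hz t ht)) τ
  rw [radialTransport, hresc, volterraSol_timeRescale τ (hunit z hz), mul_one]
  exact hresc ▸ hunit _ (hV z hz τ τ.2)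

theorem fiberCovDeriv_radialTransport_radial [CompleteSpace M] (hV : IsFiberStarShaped y₀ V)
    (hω : ∀ z ∈ V, ContinuousAt ω z)
    (hunit : ∀ z ∈ V, IsUnit (volterraOp (rayCoeff ω y₀ z)))
    (hA : ∀ z ∈ V, DifferentiableAt ℝ (radialTransport ω y₀) z) (hz : z ∈ V) :
    fiberCovDeriv ω (radialTransport ω y₀) z (z.2 - y₀) = 0 := by
  let b := rayCoeff ω y₀ z
  have hb1 : b 1 = ω z (z.2 - y₀) := by
    simpa [fiberRay_one] using rayCoeff_apply (fun t ht => hω _ (hV z hz t ht)) 1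
  have hsol : HasDerivWithinAt ((volterraSol b).IccExtend zero_le_one)
      (-(radialTransport ω y₀ z * ω z (z.2 - y₀))) I 1 := by
    rw [← hb1]
    exact hasDerivWithinAt_volterraSol (hunit z hz) 1
  have hchain : HasDerivAt (radialTransport ω y₀ ∘ fiberRay y₀ z)
      (fderiv ℝ (radialTransport ω y₀) z (0, z.2 - y₀)) 1 :=
    HasFDerivAt.comp_hasDerivAt_of_eq (1 : ℝ) (hA z hz).hasFDerivAt (hasDerivAt_fiberRay y₀ z 1)
      (fiberRay_one y₀ z).symm
  have hray : EqOn (radialTransport ω y₀ ∘ fiberRay y₀ z) ((volterraSol b).IccExtend zero_le_one)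
      I := fun τ hτ => by
    rw [ContinuousMap.coe_IccExtend, IccExtend_of_mem _ _ hτ]
    exact radialTransport_fiberRay hV hω hunit hz ⟨τ, hτ⟩
  have h1 : (1 : ℝ) ∈ I := right_mem_Icc.2 zero_le_one
  rw [fiberCovDeriv_apply, ← (uniqueDiffOn_Icc_zero_one 1 h1).eq_deriv I
    (hsol.congr_of_mem hray h1) hchain.hasDerivWithinAt, neg_add_cancel]

theorem eventually_isUnit_volterraOp_rayCoeff [CompleteSpace M] {z₀ : Q × Y}
    (hω : ∀ᶠ z in 𝓝 z₀, ContDiffAt ℝ (⊤ : ℕ∞) ω z) :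
    ∀ᶠ z in 𝓝 z₀, IsUnit (volterraOp (rayCoeff ω z₀.2 z)) := by
  obtain ⟨ε, hε, hωε⟩ := eventually_nhds_iff_ball.1 hω
  have hcoeff : ContinuousAt (rayCoeff ω z₀.2) z₀ :=
    (contDiffOn_rayCoeff isOpen_ball (isFiberStarShaped_ball z₀ ε) hωε).continuousOn.continuousAt
      (ball_mem_nhds z₀ hε)
  have hunit : IsUnit (volterraOp (rayCoeff ω z₀.2 z₀)) := by
    rw [rayCoeff_of_snd_eq hω.self_of_nhds.continuousAt rfl, volterraOp_zero]
    exact isUnit_one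
  exact hcoeff.eventually (isOpen_setOf_isUnit_volterraOp.eventually_mem hunit)

theorem exists_contDiffOn_fiberCovDeriv_eq_zero [CompleteSpace M] {U : Set (Q × Y)}
    (hU : IsOpen U) (hω : ContDiffOn ℝ (⊤ : ℕ∞) ω U) (hflat : ∀ z ∈ U, fiberCurvature ω z = 0)
    {z₀ : Q × Y} (hz₀ : z₀ ∈ U) :
    ∃ V ⊆ U, IsOpen V ∧ z₀ ∈ V ∧ ∃ A : Q × Y → M, ContDiffOn ℝ (⊤ : ℕ∞) A V ∧ A z₀ = 1 ∧
      ∀ z ∈ V, fiberCovDeriv ω A z = 0 := by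
  have hωU : ∀ z ∈ U, ContDiffAt ℝ (⊤ : ℕ∞) ω z := fun z hz => hω.contDiffAt (hU.mem_nhds hz)
  have hωnhds : ∀ᶠ z in 𝓝 z₀, ContDiffAt ℝ (⊤ : ℕ∞) ω z := by
    filter_upwards [hU.mem_nhds hz₀] using hωU
  obtain ⟨δ, hδ, hball⟩ := eventually_nhds_iff_ball.1
    ((hU.eventually_mem hz₀).and (eventually_isUnit_volterraOp_rayCoeff hωnhds))
  have hsub : ball z₀ δ ⊆ U := fun z hz => (hball z hz).1
  have hunit : ∀ z ∈ ball z₀ δ, IsUnit (volterraOp (rayCoeff ω z₀.2 z)) := fun z hz =>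
    (hball z hz).2
  have hstar := isFiberStarShaped_ball z₀ δ
  have hωball : ∀ z ∈ ball z₀ δ, ContDiffAt ℝ (⊤ : ℕ∞) ω z := fun z hz => hωU z (hsub hz)
  have hA := contDiffOn_radialTransport isOpen_ball hstar hωball hunit
  have hA' : ∀ z ∈ ball z₀ δ, ContDiffAt ℝ (⊤ : ℕ∞) (radialTransport ω z₀.2) z :=
    fun z hz => hA.contDiffAt (isOpen_ball.mem_nhds hz)
  have hradial : ∀ z ∈ ball z₀ δ,
      fiberCovDeriv ω (radialTransport ω z₀.2) z (z.2 - z₀.2) = 0 := fun z hz =>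
    fiberCovDeriv_radialTransport_radial hstar (fun z hz => (hωball z hz).continuousAt) hunit
      (fun z hz => (hA' z hz).differentiableAt (by simp)) hz
  exact ⟨ball z₀ δ, hsub, isOpen_ball, mem_ball_self hδ, radialTransport ω z₀.2, hA,
    radialTransport_of_snd_eq (hωU z₀ hz₀).continuousAt rfl, fun z hz =>
      fiberCovDeriv_eq_zero_of_radial isOpen_ball hstar
        (fun z hz => (hωball z hz).differentiableAt (by simp)) (fun z hz => hflat z (hsub hz))
        (fun z hz => contDiffAt_infty.1 (hA' z hz) 2) hradial hz⟩

end RadialTransport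

section Matrix
open scoped Matrix.Norms.L2Operator

theorem contDiffOn_matrix_of_iff {E ι κ : Type*} [NormedAddCommGroup E] [NormedSpace ℝ E]
    [Fintype ι] [Fintype κ] [DecidableEq κ] {n : WithTop ℕ∞} {s : Set E} {f : E → ι → κ → ℝ} :
    ContDiffOn ℝ n (fun z => Matrix.of (f z)) s ↔ ContDiffOn ℝ n f s :=
  (Matrix.ofLinearEquiv ℝ : (ι → κ → ℝ) ≃ₗ[ℝ] _).toContinuousLinearEquiv.comp_contDiffOn_iff

theorem fderiv_matrix_apply {E ι κ : Type*} [NormedAddCommGroup E] [NormedSpace ℝ E] [Finite ι]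
    [Finite κ] {A : E → Matrix ι κ ℝ} {z : E} (hA : DifferentiableAt ℝ A z) (h : E) (i : ι)
    (j : κ) : fderiv ℝ (fun w => A w i j) z h = fderiv ℝ A z h i j := by
  classical
  cases nonempty_fintype ι
  cases nonempty_fintype κ
  have hentry := (Matrix.entryLinearMap ℝ ℝ i j).toContinuousLinearMap.hasFDerivAt (x := A z)
  exact congrArg (fun L : E →L[ℝ] ℝ => L h) (hentry.comp z hA.hasFDerivAt).fderiv

variable {Q ι κ : Type*} [Fintype ι] {β : ι → κ → κ → Q × (ι → ℝ) → ℝ} {z : Q × (ι → ℝ)}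

/-- The matrix-valued form `∑ l, β l dy^l`, where `β l m k` is the entry in row `m` and column `k`:
multiplication from the right by this form is the action of the connection on row vectors. -/
noncomputable def connectionForm (β : ι → κ → κ → Q × (ι → ℝ) → ℝ) (z : Q × (ι → ℝ)) :
    (ι → ℝ) →L[ℝ] Matrix κ κ ℝ :=
  ∑ l, (ContinuousLinearMap.proj l).smulRight (Matrix.of fun m k => β l m k z)

theorem connectionForm_single [DecidableEq ι] (l : ι) :
    connectionForm β z (Pi.single l 1) = Matrix.of fun m k => β l m k z := by
  simp [connectionForm, Pi.single_apply]

variable [NormedAddCommGroup Q] [NormedSpace ℝ Q]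

theorem contDiffOn_connectionForm [Fintype κ] [DecidableEq κ] {n : WithTop ℕ∞}
    {U : Set (Q × (ι → ℝ))} (hβ : ∀ l m k, ContDiffOn ℝ n (β l m k) U) :
    ContDiffOn ℝ n (connectionForm β) U :=
  ContDiffOn.sum fun l _ => contDiffOn_const.smulRight <|
    contDiffOn_matrix_of_iff.2 <| contDiffOn_pi.2 fun m => contDiffOn_pi.2 fun k => hβ l m k

theorem fderiv_connectionForm_single [DecidableEq ι] [Finite κ]
    (hω : DifferentiableAt ℝ (connectionForm β) z) (h : Q × (ι → ℝ)) (l : ι) (m k : κ) :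
    fderiv ℝ (connectionForm β) z h (Pi.single l 1) m k = fderiv ℝ (β l m k) z h := by
  classical
  cases nonempty_fintype κ
  have happly := hω.hasFDerivAt.clm_apply (hasFDerivAt_const (Pi.single l (1 : ℝ)) z)
  have hentry := fderiv_matrix_apply happly.differentiableAt h m k
  rw [happly.fderiv] at hentry
  simpa [connectionForm_single] using hentry.symm

variable [DecidableEq ι] [Fintype κ] [DecidableEq κ]

theorem fiberCovDeriv_connectionForm_single {A : Q × (ι → ℝ) → Matrix κ κ ℝ}
    (hA : DifferentiableAt ℝ A z) (l : ι) (j k : κ) :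
    fiberCovDeriv (connectionForm β) A z (Pi.single l 1) j k =
      fderiv ℝ (fun w => A w j k) z (0, Pi.single l 1) + ∑ m, A z j m * β l m k z := by
  rw [fiberCovDeriv_apply, connectionForm_single, fderiv_matrix_apply hA]
  rfl

theorem fiberCurvature_connectionForm_single (hω : DifferentiableAt ℝ (connectionForm β) z)
    (i j : ι) (k l : κ) :
    fiberCurvature (connectionForm β) z (Pi.single i 1) (Pi.single j 1) k l =
      fderiv ℝ (β j k l) z (0, Pi.single i 1) - fderiv ℝ (β i k l) z (0, Pi.single j 1) +
        ∑ m, (β i m l z * β j k m z - β j m l z * β i k m z) := by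
  simp only [fiberCurvature_apply, connectionForm_single, Matrix.add_apply, Matrix.sub_apply,
    Matrix.mul_apply, Matrix.of_apply, fderiv_connectionForm_single hω, Finset.sum_sub_distrib,
    mul_comm]

theorem stmt5_general {Q ι κ : Type u} [NormedAddCommGroup Q] [NormedSpace ℝ Q] [Fintype ι]
    [DecidableEq ι] [Fintype κ] [DecidableEq κ] {U : Set (Q × (ι → ℝ))} (hU : IsOpen U)
    {β : ι → κ → κ → Q × (ι → ℝ) → ℝ} (hβ : ∀ l m k, ContDiffOn ℝ (⊤ : ℕ∞) (β l m k) U)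
    (hflat : ∀ i j k l, ∀ z ∈ U,
      fderiv ℝ (β j k l) z (0, Pi.single i 1) - fderiv ℝ (β i k l) z (0, Pi.single j 1) +
        ∑ m, (β i m l z * β j k m z - β j m l z * β i k m z) = 0)
    {z₀ : Q × (ι → ℝ)} (hz₀ : z₀ ∈ U) :
    ∃ V ⊆ U, IsOpen V ∧ z₀ ∈ V ∧ ∃ A : Q × (ι → ℝ) → κ → κ → ℝ,
      ContDiffOn ℝ (⊤ : ℕ∞) A V ∧ (∀ j k, A z₀ j k = if j = k then 1 else 0) ∧
        ∀ z ∈ V, ∀ j k l,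
          fderiv ℝ (fun w => A w j k) z (0, Pi.single l 1) + ∑ m, A z j m * β l m k z = 0 := by
  have hω : ContDiffOn ℝ (⊤ : ℕ∞) (connectionForm β) U := contDiffOn_connectionForm hβ
  have hcurv : ∀ z ∈ U, fiberCurvature (connectionForm β) z = 0 := by
    intro z hz
    have hωz := (hω.contDiffAt (hU.mem_nhds hz)).differentiableAt (by simp)
    refine ContinuousLinearMap.coe_injective ((Pi.basisFun ℝ ι).ext fun i =>
      ContinuousLinearMap.coe_injective ((Pi.basisFun ℝ ι).ext fun j => ?_))
    ext k l
    simpa [fiberCurvature_connectionForm_single hωz] using hflat i j k l z hz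
  obtain ⟨V, hVU, hV, hzV, A, hA, hA₀, hcov⟩ :=
    exists_contDiffOn_fiberCovDeriv_eq_zero hU hω hcurv hz₀
  refine ⟨V, hVU, hV, hzV, A, contDiffOn_matrix_of_iff.1 hA, fun j k => ?_, fun z hz j k l => ?_⟩
  · rw [hA₀, Matrix.one_apply]
  · have hAz := (hA.contDiffAt (hV.mem_nhds hz)).differentiableAt (by simp)
    rw [← fiberCovDeriv_connectionForm_single hAz, hcov z hz]
    rfl

end Matrix

theorem stmt5 (p n : ℕ)
    (U : Set ((Fin p → ℝ) × (Fin n → ℝ))) (hU : IsOpen U)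
    -- `β l m' k` stands for `β^k_{l m'}`
    (β : Fin n → Fin n → Fin n → ((Fin p → ℝ) × (Fin n → ℝ)) → ℝ)
    (hβ : ∀ l m' k, ContDiffOn ℝ (⊤ : ℕ∞) (β l m' k) U)
    (hflat : ∀ i j k l, ∀ z ∈ U,
      fderiv ℝ (β j k l) z (eVec p n i) - fderiv ℝ (β i k l) z (eVec p n j) +
        ∑ m', (β i m' l z * β j k m' z - β j m' l z * β i k m' z) = 0)
    (z₀ : (Fin p → ℝ) × (Fin n → ℝ)) (hz₀ : z₀ ∈ U) :
    ∃ U' : Set ((Fin p → ℝ) × (Fin n → ℝ)), U' ⊆ U ∧ IsOpen U' ∧ z₀ ∈ U' ∧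
      ∃ A : ((Fin p → ℝ) × (Fin n → ℝ)) → Fin n → Fin n → ℝ,
        ContDiffOn ℝ (⊤ : ℕ∞) A U' ∧
        (∀ j k, A z₀ j k = if j = k then 1 else 0) ∧
        (∀ z ∈ U', ∀ j k l,
          fderiv ℝ (fun w => A w j k) z (eVec p n l) +
            ∑ m', A z j m' * β l m' k z = 0) :=
  stmt5_general hU hβ hflat hz₀
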